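/- The connected components of the graph G defined by |S_{ij}| > λα (i ≠ j) coincide exactly, up to relabeling, with the connected components of the graph 𝒢 defined by Θ*_{ij} ≠ 0 (i ≠ j), where Θ* is the unique graphical elastic net minimizer: the two graphs have the same number of connected components and the same vertex partitions. -/

import Mathlib

open Matrix BigOperators

/-- The graphical elastic net objective (zero target). -/
noncomputable def gelnetObj {p : ℕ} (S : Matrix (Fin p) (Fin p) ℝ) (l a : ℝ)
    (Θ : Matrix (Fin p) (Fin p) ℝ) : ℝ :=
  -Real.log Θ.det + (S * Θ).trace +
    l * (a * ∑ i, ∑ j, |Θ i j| + (1 - a) / 2 * ∑ i, ∑ j, (Θ i j) ^ 2)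

open scoped MatrixOrder in
theorem posDef_factor {p : ℕ} {A : Matrix (Fin p) (Fin p) ℝ} (hA : A.PosDef) :
    ∃ C : Matrix (Fin p) (Fin p) ℝ, IsUnit C ∧ A = Cᴴ * C := by
  obtain ⟨C, hC, h⟩ := CStarAlgebra.isStrictlyPositive_iff_eq_star_mul_self.mp
    hA.isStrictlyPositive
  exact ⟨C, hC, h⟩

theorem det_lt_one_of_trace {p : ℕ} {M : Matrix (Fin p) (Fin p) ℝ} (hM : M.PosDef)
    (htr : M.trace = p) (hne : M ≠ 1) : M.det < 1 := by
  have hdet := hM.1.det_eq_prod_eigenvalues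
  have htr' := hM.1.trace_eq_sum_eigenvalues
  simp only [RCLike.ofReal_real_eq_id, id] at hdet htr'
  have hex : ∃ i, hM.1.eigenvalues i ≠ 1 := by
    by_contra! hall
    apply hne
    have := hM.1.spectral_theorem
    have h1 : (RCLike.ofReal ∘ hM.1.eigenvalues : Fin p → ℝ) = fun _ => 1 := by
      ext i; simp [hall i]
    rw [h1, diagonal_one, map_one] at this
    exact this
  obtain ⟨i, hi⟩ := hex
  have h2 : ∏ i, hM.1.eigenvalues i < ∏ i, Real.exp (hM.1.eigenvalues i - 1) := by
    apply Finset.prod_lt_prod (fun k _ => hM.eigenvalues_pos k)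
    · intro k _
      linarith [Real.add_one_le_exp (hM.1.eigenvalues k - 1)]
    · exact ⟨i, Finset.mem_univ _, by
        linarith [Real.add_one_lt_exp (sub_ne_zero.mpr hi)]⟩
  rw [← Real.exp_sum, Finset.sum_sub_distrib, ← htr', htr] at h2
  simp at h2
  rw [hdet]; exact h2

theorem det_lt_of_trace {p : ℕ} {A B : Matrix (Fin p) (Fin p) ℝ} (hA : A.PosDef)
    (hB : B.PosDef) (htr : (A⁻¹ * (B - A)).trace = 0) (hne : B ≠ A) : B.det < A.det := by
  obtain ⟨C, hC, hAC⟩ := posDef_factor hA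
  have hCd : IsUnit C.det := (isUnit_iff_isUnit_det C).mp hC
  have hAd : IsUnit A.det := (isUnit_iff_isUnit_det A).mp hA.isUnit
  have hCi : IsUnit C⁻¹ := (isUnit_nonsing_inv_iff).mpr hC
  have hM : (star C⁻¹ * B * C⁻¹).PosDef := (IsUnit.posDef_star_left_conjugate_iff hCi).mpr hB
  have hCC : C⁻¹ * C = 1 := nonsing_inv_mul C hCd
  have hCC2 : C * C⁻¹ = 1 := mul_nonsing_inv C hCd
  have hCs : star C⁻¹ * star C = 1 := by rw [← star_mul, hCC2, star_one]
  have hCs2 : star C * star C⁻¹ = 1 := by rw [← star_mul, hCC, star_one]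
  have hAi : A⁻¹ = C⁻¹ * star C⁻¹ := by
    apply inv_eq_right_inv
    rw [hAC, ← star_eq_conjTranspose, mul_assoc, ← mul_assoc C, hCC2, one_mul, hCs2]
  have ht : (star C⁻¹ * B * C⁻¹).trace = p := by
    rw [mul_sub, nonsing_inv_mul A hAd, trace_sub, trace_one, Fintype.card_fin] at htr
    rw [trace_mul_comm, ← mul_assoc, ← hAi]; linarith
  have hBe : B = star C * (star C⁻¹ * B * C⁻¹) * C := by
    calc B = (star C * star C⁻¹) * B * (C⁻¹ * C) := by rw [hCs2, hCC, one_mul, mul_one]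
      _ = _ := by simp only [mul_assoc]
  have hn : star C⁻¹ * B * C⁻¹ ≠ 1 := by
    intro h
    rw [h, mul_one] at hBe
    exact hne (hBe.trans hAC.symm)
  have := det_lt_one_of_trace hM ht hn
  have hAdet : A.det = (star C).det * C.det := by rw [hAC, det_mul]; rfl
  have hp := hA.det_pos
  calc B.det = A.det * (star C⁻¹ * B * C⁻¹).det := by
        rw [hBe, det_mul, det_mul, ← hBe, hAdet]; ring
    _ < A.det * 1 := by gcongr
    _ = A.det := mul_one _

theorem posDef_perturb {p : ℕ} {A : Matrix (Fin p) (Fin p) ℝ} (hA : A.PosDef) (i j : Fin p) :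
    ∃ δ > 0, ∀ t : ℝ, |t| < δ →
      (A + t • (single i j (1:ℝ) + single j i 1)).PosDef := by
  obtain ⟨C, hC, hAC⟩ := posDef_factor hA
  have hCd : IsUnit C.det := (isUnit_iff_isUnit_det C).mp hC
  have hCC : C⁻¹ * C = 1 := nonsing_inv_mul C hCd
  have key : ∀ k : Fin p, ∀ x : Fin p → ℝ,
      x k ^ 2 ≤ (∑ m, C⁻¹ k m ^ 2) * (x ⬝ᵥ A *ᵥ x) := by
    intro k x
    have h1 : x k = ∑ m, C⁻¹ k m * (C *ᵥ x) m := by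
      have : x = C⁻¹ *ᵥ (C *ᵥ x) := by rw [mulVec_mulVec, hCC, one_mulVec]
      conv_lhs => rw [this]
      rfl
    have h2 : x ⬝ᵥ A *ᵥ x = ∑ m, (C *ᵥ x) m ^ 2 := by
      rw [hAC, ← mulVec_mulVec, dotProduct_mulVec, conjTranspose_eq_transpose_of_trivial,
        vecMul_transpose]
      simp [dotProduct, sq]
    rw [h2]
    calc x k ^ 2 = (∑ m, C⁻¹ k m * (C *ᵥ x) m) ^ 2 := by rw [← h1]
      _ ≤ _ := Finset.sum_mul_sq_le_sq_mul_sq _ _ _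
  set c := (∑ m, C⁻¹ i m ^ 2) + ∑ m, C⁻¹ j m ^ 2 with hc
  have hc0 : 0 ≤ c := by positivity
  refine ⟨1 / (c + 1), by positivity, fun t ht => ?_⟩
  apply PosDef.of_dotProduct_mulVec_pos
  · have h := hA.1
    unfold IsHermitian at h ⊢
    rw [conjTranspose_add, h, conjTranspose_smul, conjTranspose_add, conjTranspose_single,
      conjTranspose_single]
    simp [add_comm]
  · intro x hx
    have hq := hA.dotProduct_mulVec_pos hx
    simp only [star_trivial] at hq ⊢
    have e : x ⬝ᵥ (A + t • (single i j (1:ℝ) + single j i 1)) *ᵥ x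
        = x ⬝ᵥ A *ᵥ x + t * (2 * (x i * x j)) := by
      rw [add_mulVec, smul_mulVec, dotProduct_add, dotProduct_smul, add_mulVec, dotProduct_add,
        single_mulVec_eq, single_mulVec_eq]
      simp
      left; ring
    rw [e]
    have hi := key i x
    have hj := key j x
    have hxy : |2 * (x i * x j)| ≤ c * (x ⬝ᵥ A *ᵥ x) := by
      rw [abs_le]; constructor <;> nlinarith [sq_nonneg (x i + x j), sq_nonneg (x i - x j)]
    have h3 : |t * (2 * (x i * x j))| ≤ 1 / (c + 1) * (c * (x ⬝ᵥ A *ᵥ x)) := by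
      rw [abs_mul]; gcongr
    have h4 : 1 / (c + 1) * (c * (x ⬝ᵥ A *ᵥ x)) < x ⬝ᵥ A *ᵥ x := by
      rw [div_mul_eq_mul_div, div_lt_iff₀ (by positivity)]; nlinarith
    linarith [neg_abs_le (t * (2 * (x i * x j)))]

/-- Sign flip on a vertex set. -/
noncomputable def flipM {p : ℕ} (P : Fin p → Prop) [DecidablePred P] :
    Matrix (Fin p) (Fin p) ℝ := diagonal fun k => if P k then -1 else 1

theorem flipM_sq {p : ℕ} (P : Fin p → Prop) [DecidablePred P] : flipM P * flipM P = 1 := by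
  rw [flipM, diagonal_mul_diagonal, ← diagonal_one]
  congr 1; ext k; split_ifs <;> simp

theorem flipM_det {p : ℕ} (P : Fin p → Prop) [DecidablePred P] (M : Matrix (Fin p) (Fin p) ℝ) :
    (flipM P * M * flipM P).det = M.det := by
  have := congrArg det (flipM_sq P)
  rw [det_mul, det_one] at this
  rw [det_mul, det_mul]
  linear_combination M.det * this

theorem flipM_apply {p : ℕ} (P : Fin p → Prop) [DecidablePred P] (M : Matrix (Fin p) (Fin p) ℝ)
    (k l : Fin p) : (flipM P * M * flipM P) k l = if (P k ↔ P l) then M k l else - M k l := by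
  rw [flipM, mul_diagonal, diagonal_mul]
  by_cases h1 : P k <;> by_cases h2 : P l <;> simp [h1, h2]

theorem deriv_logdet {p : ℕ} {A E : Matrix (Fin p) (Fin p) ℝ} (hA : A.PosDef)
    (P : Fin p → Prop) [DecidablePred P] (h1 : flipM P * A * flipM P = A)
    (h2 : flipM P * E * flipM P = -E) :
    HasDerivAt (fun t : ℝ => Real.log (A + t • E).det) 0 0 := by
  have hd : Differentiable ℝ (fun t : ℝ => (A + t • E).det) := by
    simp only [det_apply, Matrix.add_apply, Matrix.smul_apply, smul_eq_mul, zsmul_eq_mul, Units.smul_def]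
    fun_prop
  have heven : ∀ t : ℝ, (A + (-t) • E).det = (A + t • E).det := by
    intro t
    rw [← flipM_det P (A + t • E)]
    congr 1
    rw [mul_add, add_mul, h1, Matrix.mul_smul, Matrix.smul_mul, h2]
    simp
  have hD := (hd 0).hasDerivAt
  have hD2 : HasDerivAt (fun t : ℝ => (A + (-t) • E).det)
      (deriv (fun t : ℝ => (A + t • E).det) 0 * (-1)) 0 := by
    have h0 : HasDerivAt (fun t : ℝ => (A + t • E).det)
      (deriv (fun t : ℝ => (A + t • E).det) 0) (-0) := by simpa using hD
    exact h0.comp (0:ℝ) (hasDerivAt_neg 0)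
  simp only [heven] at hD2
  have hz := hD.unique hD2
  have hz' : deriv (fun t : ℝ => (A + t • E).det) 0 = 0 := by linarith
  rw [hz'] at hD
  have := hD.log (by simpa using hA.det_pos.ne')
  simpa using this

theorem symm_entry {p : ℕ} {A : Matrix (Fin p) (Fin p) ℝ} (hA : A.IsHermitian) (i j : Fin p) :
    A j i = A i j := by
  simpa using hA.apply i j

theorem gelnet_kkt {p : ℕ} {S A : Matrix (Fin p) (Fin p) ℝ} {l a : ℝ}
    (hS : S.IsHermitian) (hA : A.PosDef)
    (hmin : ∀ Θ : Matrix (Fin p) (Fin p) ℝ, Θ.PosDef → gelnetObj S l a A ≤ gelnetObj S l a Θ)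
    (P : Fin p → Prop) [DecidablePred P] (hP : ∀ k m, P k → ¬ P m → A k m = 0)
    {i j : Fin p} (hi : P i) (hj : ¬ P j) : |S i j| ≤ l * a := by
  by_contra! hlt
  have hij : i ≠ j := by rintro rfl; exact hj hi
  set E : Matrix (Fin p) (Fin p) ℝ := single i j (1:ℝ) + single j i 1 with hE
  have hEv : ∀ k m, E k m = if (k = i ∧ m = j) ∨ (k = j ∧ m = i) then 1 else 0 := by
    intro k m
    simp only [hE, Matrix.add_apply, single_apply]
    grind
  have hAij : A i j = 0 := hP i j hi hj
  have hAji : A j i = 0 := by rw [symm_entry hA.1, hAij]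
  have h1 : flipM P * A * flipM P = A := by
    ext k m
    rw [flipM_apply]
    split_ifs with h
    · rfl
    · by_cases hk : P k
      · have hm : ¬ P m := by tauto
        rw [hP k m hk hm, neg_zero]
      · have hm : P m := by tauto
        rw [symm_entry hA.1, hP m k hm hk, neg_zero]
  have h2 : flipM P * E * flipM P = -E := by
    ext k m
    rw [flipM_apply, Matrix.neg_apply, hEv]
    grind
  obtain ⟨δ, hδ, hpd⟩ := posDef_perturb hA i j
  have hsum : ∑ k, ∑ m, E k m = 2 := by
    simp only [hE, Matrix.add_apply, Finset.sum_add_distrib, single_apply]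
    simp [Finset.sum_ite, ite_and]
    norm_num
  have habs : ∀ t : ℝ, ∑ k, ∑ m, |(A + t • E) k m| = (∑ k, ∑ m, |A k m|) + |t| * 2 := by
    intro t
    rw [← hsum, Finset.mul_sum, ← Finset.sum_add_distrib]
    refine Finset.sum_congr rfl fun k _ => ?_
    rw [Finset.mul_sum, ← Finset.sum_add_distrib]
    refine Finset.sum_congr rfl fun m _ => ?_
    rw [Matrix.add_apply, Matrix.smul_apply, hEv]
    split_ifs with h
    · rcases h with ⟨rfl, rfl⟩ | ⟨rfl, rfl⟩ <;> simp [hAij, hAji]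
    · simp
  have hsq : ∀ t : ℝ, ∑ k, ∑ m, ((A + t • E) k m) ^ 2 = (∑ k, ∑ m, (A k m) ^ 2) + t ^ 2 * 2 := by
    intro t
    rw [← hsum, Finset.mul_sum, ← Finset.sum_add_distrib]
    refine Finset.sum_congr rfl fun k _ => ?_
    rw [Finset.mul_sum, ← Finset.sum_add_distrib]
    refine Finset.sum_congr rfl fun m _ => ?_
    rw [Matrix.add_apply, Matrix.smul_apply, hEv]
    split_ifs with h
    · rcases h with ⟨rfl, rfl⟩ | ⟨rfl, rfl⟩ <;> simp [hAij, hAji]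
    · simp
  have htr : ∀ t : ℝ, (S * (A + t • E)).trace = (S * A).trace + 2 * t * S i j := by
    intro t
    rw [mul_add, trace_add, Matrix.mul_smul, trace_smul, hE, mul_add, trace_add,
      trace_mul_single, trace_mul_single, symm_entry hS]
    simp
    ring
  have hineq : ∀ t : ℝ, |t| < δ → Real.log (A + t • E).det - Real.log A.det ≤
      2 * t * S i j + 2 * (l * a) * |t| + l * (1 - a) * t ^ 2 := by
    intro t ht
    have := hmin _ (hpd t ht)
    unfold gelnetObj at this
    rw [← hE, habs, hsq, htr] at this
    linarith
  have hder := deriv_logdet hA P h1 h2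
  rw [hasDerivAt_iff_isLittleO] at hder
  have hε : 0 < |S i j| - l * a := by linarith
  have hev := hder.def hε
  simp only [zero_smul, add_zero, sub_zero, smul_zero, Real.norm_eq_abs] at hev
  obtain ⟨η, hη, hball⟩ := Metric.eventually_nhds_iff.mp hev
  set ε := |S i j| - l * a with hεd
  set c := |l * (1 - a)| with hc
  have hc0 : 0 ≤ c := abs_nonneg _
  obtain ⟨u, hu0, hu⟩ : ∃ u > 0, u < min (min δ η) (ε / (c + 1)) :=
    exists_between (lt_min (lt_min hδ hη) (by positivity))
  rw [lt_min_iff, lt_min_iff] at hu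
  obtain ⟨⟨hu1, hu2⟩, hu3⟩ := hu
  rw [lt_div_iff₀ (by positivity)] at hu3
  obtain ⟨t, ht, hts⟩ : ∃ t : ℝ, |t| = u ∧ t * S i j = - (u * |S i j|) := by
    rcases abs_cases (S i j) with ⟨h, _⟩ | ⟨h, _⟩
    · exact ⟨-u, by rw [abs_neg, abs_of_pos hu0], by rw [h]; ring⟩
    · exact ⟨u, abs_of_pos hu0, by rw [h]; ring⟩
  have e1 := hineq t (by rw [ht]; exact hu1)
  have e2 := hball (y := t) (by rw [Real.dist_eq, sub_zero, ht]; exact hu2)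
  have e3 := neg_abs_le (Real.log (A + t • E).det - Real.log A.det)
  have e4 : t ^ 2 = u ^ 2 := by rw [← ht, sq_abs]
  have e5 : l * (1 - a) ≤ c := le_abs_self _
  rw [ht] at e1 e2
  rw [e4] at e1
  have e6 : l * (1 - a) * u ^ 2 ≤ c * u ^ 2 := by gcongr
  have e7 : u * (u * (c + 1)) < u * ε := by gcongr
  have e8 : 2 * t * S i j = -2 * (u * |S i j|) := by linear_combination 2 * hts
  nlinarith

theorem gelnet_block {p : ℕ} {S A : Matrix (Fin p) (Fin p) ℝ} {l a : ℝ}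
    (hl : 0 < l) (ha1 : a ≤ 1)
    (hS : S.IsHermitian) (hA : A.PosDef)
    (hmin : ∀ Θ : Matrix (Fin p) (Fin p) ℝ, Θ.PosDef → gelnetObj S l a A ≤ gelnetObj S l a Θ)
    (P : Fin p → Prop) [DecidablePred P] (hP : ∀ k m, P k → ¬ P m → |S k m| ≤ l * a) :
    ∀ k m, P k → ¬ P m → A k m = 0 := by
  set D := flipM P with hD
  have hDu : IsUnit D := IsUnit.of_mul_eq_one D (flipM_sq P)
  have hDs : star D = D := by
    rw [hD, flipM, star_eq_conjTranspose, diagonal_conjTranspose]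
    simp
  have hDAD : (D * A * D).PosDef := by
    have := (Matrix.IsUnit.posDef_star_left_conjugate_iff hDu).mpr hA
    rwa [hDs] at this
  set B : Matrix (Fin p) (Fin p) ℝ := (1 / 2 : ℝ) • (A + D * A * D) with hB
  have hBpd : B.PosDef := (hA.add hDAD).smul (by norm_num)
  have hBv : ∀ k m, B k m = if (P k ↔ P m) then A k m else 0 := by
    intro k m
    rw [hB, Matrix.smul_apply, Matrix.add_apply, hD, flipM_apply]
    split_ifs <;> simp
    ring
  have hDBD : D * B * D = B := by
    ext k m
    rw [hD, flipM_apply, hBv]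
    split_ifs <;> simp
  have hDN : D * (A - B) * D = -(A - B) := by
    ext k m
    rw [hD, flipM_apply, Matrix.neg_apply, Matrix.sub_apply, hBv]
    split_ifs <;> simp
  have hDD : D * D = 1 := flipM_sq P
  have hBd : IsUnit B.det := (isUnit_iff_isUnit_det B).mp hBpd.isUnit
  have hDKD : B⁻¹ = D * B⁻¹ * D := by
    apply inv_eq_right_inv
    calc B * (D * B⁻¹ * D) = (D * B * D) * (D * B⁻¹ * D) := by rw [hDBD]
      _ = D * B * (D * D) * B⁻¹ * D := by simp only [mul_assoc]
      _ = D * (B * B⁻¹) * D := by rw [hDD]; simp only [mul_assoc, mul_one, one_mul]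
      _ = 1 := by rw [mul_nonsing_inv B hBd, mul_one, hDD]
  have htr : (B⁻¹ * (A - B)).trace = 0 := by
    have : (B⁻¹ * (A - B)).trace = -(B⁻¹ * (A - B)).trace := by
      calc (B⁻¹ * (A - B)).trace = ((D * B⁻¹ * D) * (A - B)).trace := by rw [← hDKD]
        _ = (B⁻¹ * (D * (A - B) * D)).trace := by
            rw [mul_assoc, mul_assoc, trace_mul_comm]; simp only [mul_assoc]
        _ = _ := by rw [hDN, mul_neg, trace_neg]
    linarith
  by_contra! hcon
  obtain ⟨k, m, hk, hm, hkm⟩ := hcon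
  have hne : A ≠ B := by
    intro h
    apply hkm
    rw [h, hBv, if_neg (by tauto)]
  have hdet := det_lt_of_trace hBpd hA htr hne
  have hlog := Real.log_lt_log hA.det_pos hdet
  have hobj := hmin B hBpd
  unfold gelnetObj at hobj
  have hlin : ∀ M : Matrix (Fin p) (Fin p) ℝ,
      (S * M).trace + l * a * ∑ i, ∑ j, |M i j| = ∑ i, ∑ j, (S i j * M j i + l * a * |M j i|) := by
    intro M
    simp only [Finset.sum_add_distrib, ← Finset.mul_sum]
    rw [Finset.sum_comm (f := fun i j => |M j i|)]
    simp [trace, mul_apply]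
  have hle1 : (S * B).trace + l * a * ∑ i, ∑ j, |B i j| ≤
      (S * A).trace + l * a * ∑ i, ∑ j, |A i j| := by
    rw [hlin, hlin]
    refine Finset.sum_le_sum fun i _ => Finset.sum_le_sum fun j _ => ?_
    rw [hBv]
    split_ifs with h
    · rfl
    · have hs : |S i j| ≤ l * a := by
        by_cases hi : P i
        · exact hP i j hi (by tauto)
        · rw [symm_entry hS]; exact hP j i (by tauto) hi
      have h3 := neg_abs_le (S i j * A j i)
      rw [abs_mul] at h3
      have h4 := mul_le_mul_of_nonneg_right hs (abs_nonneg (A j i))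
      simp
      linarith
  have hle2 : ∑ i, ∑ j, (B i j) ^ 2 ≤ ∑ i, ∑ j, (A i j) ^ 2 := by
    refine Finset.sum_le_sum fun i _ => Finset.sum_le_sum fun j _ => ?_
    rw [hBv]
    split_ifs with h
    · rfl
    · simp [sq_nonneg]
  have hle3 : l * ((1 - a) / 2) * ∑ i, ∑ j, (B i j) ^ 2 ≤
      l * ((1 - a) / 2) * ∑ i, ∑ j, (A i j) ^ 2 := by
    apply mul_le_mul_of_nonneg_left hle2
    have : 0 ≤ 1 - a := by linarith
    positivity
  linarith

theorem reachable_of_adj {V : Type*} {G H : SimpleGraph V}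
    (h : ∀ i j, G.Adj i j → H.Reachable i j) {i j : V} (hr : G.Reachable i j) :
    H.Reachable i j := by
  obtain ⟨w⟩ := hr
  induction w with
  | nil => exact SimpleGraph.Reachable.refl _
  | cons hadj _ ih => exact (h _ _ hadj).trans ih


/-- The connected components of the thresholded covariance graph `G` coincide with
those of the graph `𝒢` of nonzero off-diagonal entries of the minimizer: the two
graphs induce the same reachability relation, hence the same vertex partition and
number of connected components. -/
theorem gelnet_components_eq_thresholded {p : ℕ}
    (S Θstar : Matrix (Fin p) (Fin p) ℝ) (l a : ℝ)
    (hl : 0 < l) (ha : a ∈ Set.Ioc (0 : ℝ) 1)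
    (hS : S.PosSemidef)
    (hΘ : Θstar.PosDef)
    (hmin : ∀ Θ : Matrix (Fin p) (Fin p) ℝ, Θ.PosDef →
      gelnetObj S l a Θstar ≤ gelnetObj S l a Θ) :
    ∀ i j : Fin p,
      (SimpleGraph.fromRel fun i j : Fin p => l * a < |S i j|).Reachable i j ↔
      (SimpleGraph.fromRel fun i j : Fin p => Θstar i j ≠ 0).Reachable i j := by
  classical
  intro i j
  have key1 : ∀ i j : Fin p, l * a < |S i j| →
      (SimpleGraph.fromRel fun i j : Fin p => Θstar i j ≠ 0).Reachable i j := by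
    intro i j h
    by_contra hn
    refine absurd h (not_lt.mpr (gelnet_kkt hS.1 hΘ hmin
      (fun k => (SimpleGraph.fromRel fun i j : Fin p => Θstar i j ≠ 0).Reachable i k)
      ?_ (SimpleGraph.Reachable.refl _) hn))
    intro k m hk hm
    by_contra hkm
    apply hm
    by_cases e : k = m
    · exact e ▸ hk
    · exact hk.trans (SimpleGraph.Adj.reachable
        ((SimpleGraph.fromRel_adj _ _ _).mpr ⟨e, Or.inl hkm⟩))
  have key2 : ∀ i j : Fin p, Θstar i j ≠ 0 →
      (SimpleGraph.fromRel fun i j : Fin p => l * a < |S i j|).Reachable i j := by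
    intro i j h
    by_contra hn
    refine h (gelnet_block hl ha.2 hS.1 hΘ hmin
      (fun k => (SimpleGraph.fromRel fun i j : Fin p => l * a < |S i j|).Reachable i k)
      ?_ i j (SimpleGraph.Reachable.refl _) hn)
    intro k m hk hm
    by_contra! hkm
    apply hm
    by_cases e : k = m
    · exact e ▸ hk
    · exact hk.trans (SimpleGraph.Adj.reachable
        ((SimpleGraph.fromRel_adj _ _ _).mpr ⟨e, Or.inl hkm⟩))
  constructor
  · refine reachable_of_adj fun i j hadj => ?_
    rcases ((SimpleGraph.fromRel_adj _ _ _).mp hadj).2 with h | h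
    · exact key1 i j h
    · exact (key1 j i h).symm
  · refine reachable_of_adj fun i j hadj => ?_
    rcases ((SimpleGraph.fromRel_adj _ _ _).mp hadj).2 with h | h
    · exact key2 i j h
    · exact (key2 j i h).symm
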